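/- Let A be a commutative semiring and ⋀ the exterior semialgebra over A. For every r ≥ 1 and every partition λ with at most r parts, the Schubert derivations σ_-(w) and σ̄_-(w) are mutually quasi-inverse on [x]^r_λ: σ_-(w)(σ̄_-(w)[x]^r_λ) ⪰ [x]^r_λ and σ̄_-(w)(σ_-(w)[x]^r_λ) ⪰ [x]^r_λ; that is, in each composite the coefficient of w^0 equals [x]^r_λ plus possibly a quasi-zero, and the coefficient of w^{−k} for each k ≥ 1 is a quasi-zero. -/

import Mathlib

/-!  The exterior semialgebra over a commutative semiring `A`, following
Chapman–Gatto–Rowen.  It is the free `A`-module on the basis consisting of a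
unit symbol `1` (here `none`) together with all pairs `(ε, s)` where
`ε ∈ {+1, −1}` (here a `Bool`, `true = +1`) and `s` is a strictly decreasing
nonempty tuple of natural numbers (here a nonempty `Finset ℕ`, read in
decreasing order).  -/

namespace ExtSemi

/-- The basis: `none` is the unit `1`; `some (ε, s)` is the sign `ε` times the
strictly decreasing wedge monomial on the nonempty finite set `s`. -/
abbrev XB : Type := Option (Bool × {s : Finset ℕ // s.Nonempty})

variable (A : Type*) [CommSemiring A]

/-- The exterior semialgebra `⋀`: the free `A`-module on `XB`. -/
abbrev Ext : Type _ := XB →₀ A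

/-- Sign flip on the basis; the unit is fixed. -/
def negB : XB → XB
  | none => none
  | some (ε, s) => some (!ε, s)

/-- The negation map `(−)` on `⋀`: the `A`-linear map sending `(ε, s)` to
`(−ε, s)` and fixing `1`. -/
noncomputable def neg : Ext A →ₗ[A] Ext A := Finsupp.lmapDomain A A negB

/-- The signed basis element attached to a sign and a finite set; the empty set
gives the unit (on which the negation acts trivially). -/
noncomputable def bElem (ε : Bool) (t : Finset ℕ) : Ext A :=
  if h : t.Nonempty then Finsupp.single (some (ε, ⟨t, h⟩)) 1 else Finsupp.single none 1

/-- The unit `1` of `⋀`. -/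
noncomputable def one : Ext A := Finsupp.single (none : XB) 1

/-- The generator `x^i`. -/
noncomputable def xg (i : ℕ) : Ext A := bElem A true {i}

/-- `true` iff merging the decreasing enumerations of the disjoint sets `s`, `t`
(concatenated as `s ++ t`) into a single decreasing enumeration is an even
permutation, i.e. iff the number of pairs `(a ∈ s, b ∈ t)` with `a < b` is even. -/
def mergeEven (s t : Finset ℕ) : Bool :=
  decide ((∑ a ∈ s, (t.filter (fun b => a < b)).card) % 2 = 0)

/-- Wedge product of two basis elements: concatenate the tuples and multiply the
signs (`0` if the tuples share an entry). -/
noncomputable def wB : XB → XB → Ext A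
  | none, c => Finsupp.single c 1
  | some b, none => Finsupp.single (some b) 1
  | some (ε, s), some (δ, t) =>
      if s.1 ∩ t.1 = ∅ then bElem A ((ε == δ) == mergeEven s.1 t.1) (s.1 ∪ t.1) else 0

/-- The wedge product on `⋀`, extended `A`-bilinearly from the basis. -/
noncomputable def wedge (u v : Ext A) : Ext A :=
  u.sum fun b a => v.sum fun c a' => (a * a') • wB A b c

/-- Extend a map defined on the basis `A`-linearly to all of `⋀`. -/
noncomputable def ext1 (g : XB → Ext A) (u : Ext A) : Ext A := u.sum fun b a => a • g b

/-- Quasi-zeros: elements of the form `w + (−)w`. -/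
def IsQuasiZero (q : Ext A) : Prop := ∃ w : Ext A, q = w + neg A w

/-- The surpassing relation: `u ⪯ v` iff `v = u + q` for some quasi-zero `q`. -/
def Prec (u v : Ext A) : Prop := ∃ q : Ext A, IsQuasiZero A q ∧ v = u + q

/-- Twist an element by a sign. -/
noncomputable def twist (ε : Bool) (u : Ext A) : Ext A := if ε then u else neg A u

/-- `k`-fold application of the negation map. -/
noncomputable def negpow (k : ℕ) (u : Ext A) : Ext A := if k % 2 = 0 then u else neg A u

/-- Wedge product of a list of elements of `⋀`. -/
noncomputable def wedgeL (l : List (Ext A)) : Ext A := l.foldr (wedge A) (one A)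

/-- The wedge monomial `x^{j_1} ∧ ⋯ ∧ x^{j_r}` for an arbitrary tuple. -/
noncomputable def wedgeMon (l : List ℕ) : Ext A := wedgeL A (l.map (xg A))

/-- The decreasing enumeration of a finite set of naturals. -/
def descList (s : Finset ℕ) : List ℕ := (s.sort (· ≤ ·)).reverse

/-- The contraction `∂^j ⌟` on basis elements:
`∂^j ⌟ (x^{i_1} ∧ ⋯ ∧ x^{i_r}) = Σ_k (−)^{k−1}[i_k = j]·x^{i_1} ∧ ⋯ ∧ x^{i_{k-1}} ∧ x^{i_{k+1}} ∧ ⋯ ∧ x^{i_r}`,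
`∂^j ⌟ 1 = 0`; it commutes with the negation map. -/
noncomputable def contraB (j : ℕ) : XB → Ext A
  | none => 0
  | some (ε, s) =>
      if j ∈ s.1 then
        twist A ε (negpow A ((s.1.filter (fun b => j < b)).card) (bElem A true (s.1.erase j)))
      else 0

/-- The contraction `∂^j ⌟` on `⋀`, extended `A`-linearly. -/
noncomputable def contra (j : ℕ) (u : Ext A) : Ext A := ext1 A (contraB A j) u

/-- Make an `A`-linear operator on `⋀` commuting with the negation map out of a
coefficient family on decreasing lists (`F k l` = the `k`-th coefficient on the
monomial with decreasing tuple `l`); the unit is sent to itself in degree `0`. -/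
noncomputable def hsOn (F : ℕ → List ℕ → Ext A) (k : ℕ) : XB → Ext A
  | none => if k = 0 then one A else 0
  | some (ε, s) => twist A ε (F k (descList s.1))

open Finset.Nat in
/-- Coefficient of `z^k` in `σ₊(z)` on a monomial:
`σ_k (x^{i_1} ∧ ⋯ ∧ x^{i_r}) = Σ_{k_1+⋯+k_r=k} x^{i_1+k_1} ∧ ⋯ ∧ x^{i_r+k_r}`. -/
noncomputable def sigPlusL (k : ℕ) (l : List ℕ) : Ext A :=
  ∑ c ∈ antidiagonalTuple l.length k,
    wedgeMon A (List.ofFn fun i : Fin l.length => l.get i + c i)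

/-- Coefficient of `z^k` in the Schubert derivation `σ₊(z)`. -/
noncomputable def sigPlus (k : ℕ) : Ext A → Ext A := ext1 A (hsOn A (sigPlusL A) k)

open Finset.Nat in
/-- Coefficient of `w^{−k}` in `σ₋(w)`, where `σ₋(w) x^j = Σ_{k=0}^{j} x^{j−k} w^{−k}`. -/
noncomputable def sigMinusL (k : ℕ) (l : List ℕ) : Ext A :=
  ∑ c ∈ antidiagonalTuple l.length k,
    if ∀ i, c i ≤ l.get i then
      wedgeMon A (List.ofFn fun i : Fin l.length => l.get i - c i)
    else 0

/-- Coefficient of `w^{−k}` in the Schubert derivation `σ₋(w)`. -/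
noncomputable def sigMinus (k : ℕ) : Ext A → Ext A := ext1 A (hsOn A (sigMinusL A) k)

open Finset.Nat in
/-- Coefficient of `z^{−k}` in `σ̄₋(z)`, where `σ̄₋(z) x^j = x^j + ((−)x^{j−1}) z^{−1}`
(`x^{−1} := 0`). -/
noncomputable def sbarMinusL (k : ℕ) (l : List ℕ) : Ext A :=
  negpow A k (∑ c ∈ antidiagonalTuple l.length k,
    if ∀ i, c i ≤ 1 ∧ c i ≤ l.get i then
      wedgeMon A (List.ofFn fun i : Fin l.length => l.get i - c i)
    else 0)

/-- Coefficient of `z^{−k}` in the Schubert derivation `σ̄₋(z)`. -/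
noncomputable def sbarMinus (k : ℕ) : Ext A → Ext A := ext1 A (hsOn A (sbarMinusL A) k)

open Finset.Nat in
/-- Coefficient of `w^k` in `σ̄₊(w)`, where `σ̄₊(w) x^j = x^j + ((−)x^{j+1}) w`. -/
noncomputable def sbarPlusL (k : ℕ) (l : List ℕ) : Ext A :=
  negpow A k (∑ c ∈ antidiagonalTuple l.length k,
    if ∀ i, c i ≤ 1 then
      wedgeMon A (List.ofFn fun i : Fin l.length => l.get i + c i)
    else 0)

/-- Coefficient of `w^k` in the Schubert derivation `σ̄₊(w)`. -/
noncomputable def sbarPlus (k : ℕ) : Ext A → Ext A := ext1 A (hsOn A (sbarPlusL A) k)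

/-- The basis element `[x]^r_λ = x^{r−1+λ_1} ∧ x^{r−2+λ_2} ∧ ⋯ ∧ x^{λ_r}`
attached to a partition `λ` with at most `r` parts. -/
noncomputable def xlam (r : ℕ) (lam : Fin r → ℕ) : Ext A :=
  wedgeMon A (List.ofFn fun i : Fin r => (r - 1 - (i : ℕ)) + lam i)

end ExtSemi

namespace ExtSemi

section basechange
variable (A : Type*) [CommSemiring A]

/-- Base change from `ℕ`. -/
noncomputable def bc : Ext ℕ →+ Ext A := Finsupp.mapRange.addMonoidHom (Nat.castAddMonoidHom A)

lemma bc_single (b : XB) (n : ℕ) : bc A (Finsupp.single b n) = Finsupp.single b (n : A) := by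
  simp [bc]

lemma bc_smul (n : ℕ) (u : Ext ℕ) : bc A (n • u) = (n : A) • bc A u := by
  rw [map_nsmul, Nat.cast_smul_eq_nsmul]

lemma neg_single (b : XB) (a : A) : neg A (Finsupp.single b a) = Finsupp.single (negB b) a := by
  simp [neg]

lemma bc_neg (u : Ext ℕ) : bc A (neg ℕ u) = neg A (bc A u) := by
  induction u using Finsupp.induction_linear with
  | zero => simp
  | add f g hf hg => simp [hf, hg]
  | single b n => simp [neg_single, bc_single]

lemma bc_bElem (ε : Bool) (t : Finset ℕ) : bc A (bElem ℕ ε t) = bElem A ε t := by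
  unfold bElem; split <;> simp [bc_single]

lemma bc_one : bc A (one ℕ) = one A := by simp [one, bc_single]

lemma bc_wB (b c : XB) : bc A (wB ℕ b c) = wB A b c := by
  rcases b with _ | ⟨ε, s⟩ <;> rcases c with _ | ⟨δ, t⟩ <;> simp only [wB]
  · simp [bc_single]
  · simp [bc_single]
  · simp [bc_single]
  · split <;> simp [bc_bElem]

lemma ext1_zero (g : XB → Ext A) : ext1 A g 0 = 0 := by simp [ext1]
lemma ext1_add (g : XB → Ext A) (u v : Ext A) : ext1 A g (u + v) = ext1 A g u + ext1 A g v := by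
  unfold ext1
  exact Finsupp.sum_add_index' (by simp) (by simp [add_smul])
lemma ext1_single (g : XB → Ext A) (b : XB) (a : A) : ext1 A g (Finsupp.single b a) = a • g b := by
  simp [ext1]

lemma wedge_eq (u v : Ext A) : wedge A u v = ext1 A (fun b => ext1 A (wB A b) v) u := by
  simp only [wedge, ext1, Finsupp.smul_sum, smul_smul]

lemma bc_ext1 (g : XB → Ext ℕ) (g' : XB → Ext A) (h : ∀ b, bc A (g b) = g' b) (u : Ext ℕ) :
    bc A (ext1 ℕ g u) = ext1 A g' (bc A u) := by
  induction u using Finsupp.induction_linear with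
  | zero => simp [ext1_zero]
  | add f g hf hg => simp [hf, hg, ext1_add]
  | single b n => rw [bc_single, ext1_single, ext1_single, bc_smul, h]

lemma bc_wedge (u v : Ext ℕ) : bc A (wedge ℕ u v) = wedge A (bc A u) (bc A v) := by
  rw [wedge_eq, wedge_eq]
  exact bc_ext1 A _ _ (fun b => bc_ext1 A _ _ (fun c => bc_wB A b c) v) u

lemma bc_wedgeMon (l : List ℕ) : bc A (wedgeMon ℕ l) = wedgeMon A l := by
  induction l with
  | nil => exact bc_one A
  | cons a l ih =>
    change bc A (wedge ℕ (xg ℕ a) (wedgeMon ℕ l)) = wedge A (xg A a) (wedgeMon A l)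
    rw [bc_wedge, ih, xg, bc_bElem, xg]

lemma bc_negpow (k : ℕ) (u : Ext ℕ) : bc A (negpow ℕ k u) = negpow A k (bc A u) := by
  unfold negpow; split <;> simp [bc_neg]
lemma bc_twist (k : Bool) (u : Ext ℕ) : bc A (twist ℕ k u) = twist A k (bc A u) := by
  unfold twist; split <;> simp [bc_neg]

lemma bc_sigMinusL (k : ℕ) (l : List ℕ) : bc A (sigMinusL ℕ k l) = sigMinusL A k l := by
  unfold sigMinusL
  rw [map_sum]
  refine Finset.sum_congr rfl fun c _ => ?_
  split <;> simp [bc_wedgeMon]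

lemma bc_sbarMinusL (k : ℕ) (l : List ℕ) : bc A (sbarMinusL ℕ k l) = sbarMinusL A k l := by
  unfold sbarMinusL
  rw [bc_negpow, map_sum]
  congr 1
  refine Finset.sum_congr rfl fun c _ => ?_
  split <;> simp [bc_wedgeMon]

lemma bc_hsOn (F : ℕ → List ℕ → Ext ℕ) (F' : ℕ → List ℕ → Ext A)
    (h : ∀ k l, bc A (F k l) = F' k l) (k : ℕ) (b : XB) :
    bc A (hsOn ℕ F k b) = hsOn A F' k b := by
  rcases b with _ | ⟨ε, s⟩ <;> simp only [hsOn]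
  · split <;> simp [bc_one]
  · rw [bc_twist, h]

lemma bc_sigMinus (k : ℕ) (u : Ext ℕ) : bc A (sigMinus ℕ k u) = sigMinus A k (bc A u) :=
  bc_ext1 A _ _ (bc_hsOn A _ _ (bc_sigMinusL A) k) u
lemma bc_sbarMinus (k : ℕ) (u : Ext ℕ) : bc A (sbarMinus ℕ k u) = sbarMinus A k (bc A u) :=
  bc_ext1 A _ _ (bc_hsOn A _ _ (bc_sbarMinusL A) k) u

lemma bc_quasi (u : Ext ℕ) (h : IsQuasiZero ℕ u) : IsQuasiZero A (bc A u) := by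
  obtain ⟨w, rfl⟩ := h
  exact ⟨bc A w, by rw [map_add, bc_neg]⟩

/-! none-coefficients -/

lemma neg_apply_none (u : Ext A) : (neg A u) none = u none := by
  induction u using Finsupp.induction_linear with
  | zero => simp
  | add f g hf hg => simp [hf, hg]
  | single b n => rcases b with _ | ⟨ε, s⟩ <;> simp [neg_single, negB]

lemma negB_negB (b : XB) : negB (negB b) = b := by
  rcases b with _ | ⟨ε, s⟩ <;> simp [negB]

lemma neg_apply (u : Ext A) (b : XB) : (neg A u) b = u (negB b) := by
  have := Finsupp.mapDomain_apply (f := negB)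
    (Function.LeftInverse.injective negB_negB) u (negB b)
  rwa [negB_negB] at this

lemma ext1_none (g : XB → Ext A) (hg : ∀ b, (g (some b)) none = 0) (u : Ext A) (hu : u none = 0) :
    (ext1 A g u) none = 0 := by
  unfold ext1
  rw [Finsupp.sum, Finsupp.finsetSum_apply]
  refine Finset.sum_eq_zero fun b _ => ?_
  rcases b with _ | b
  · simp [hu]
  · simp [hg]

lemma bElem_none (ε : Bool) (t : Finset ℕ) (h : t.Nonempty) : (bElem A ε t) none = 0 := by
  simp [bElem, h]

lemma wedgeMon_cons_none (a : ℕ) (l : List ℕ) : (wedgeMon A (a :: l)) none = 0 := by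
  change (wedge A (xg A a) (wedgeMon A l)) none = 0
  rw [wedge_eq]
  refine ext1_none A _ ?_ _ (bElem_none A _ _ (by simp))
  rintro ⟨ε, s⟩
  unfold ext1
  rw [Finsupp.sum, Finsupp.finsetSum_apply]
  refine Finset.sum_eq_zero fun b _ => ?_
  rcases b with _ | ⟨δ, t⟩ <;> simp only [wB]
  · simp
  · split
    · simp [bElem_none A _ _ (s.2.mono Finset.subset_union_left)]
    · simp

lemma wedgeMon_none (l : List ℕ) (h : l ≠ []) : (wedgeMon A l) none = 0 := by
  cases l with
  | nil => simp at h
  | cons a l => exact wedgeMon_cons_none A a l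

lemma negpow_none (k : ℕ) (u : Ext A) (h : u none = 0) : (negpow A k u) none = 0 := by
  unfold negpow; split <;> simp [neg_apply_none, h]
lemma twist_none (k : Bool) (u : Ext A) (h : u none = 0) : (twist A k u) none = 0 := by
  unfold twist; split <;> simp [neg_apply_none, h]

lemma ofFn_ne {n : ℕ} (h : n ≠ 0) (f : Fin n → ℕ) : List.ofFn f ≠ [] := by
  simpa using h

lemma descList_ne (s : Finset ℕ) (h : s.Nonempty) : descList s ≠ [] := by
  intro h0
  have : (descList s).length = s.card := by simp [descList]
  rw [h0] at this
  have := h.card_pos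
  simp_all

lemma sigMinus_none (k : ℕ) (u : Ext A) (hu : u none = 0) : (sigMinus A k u) none = 0 := by
  refine ext1_none A _ ?_ u hu
  rintro ⟨ε, s⟩
  simp only [hsOn]
  apply twist_none
  unfold sigMinusL
  rw [Finsupp.finsetSum_apply]
  refine Finset.sum_eq_zero fun c _ => ?_
  split
  · exact wedgeMon_none A _ (ofFn_ne (by simpa using descList_ne _ s.2) _)
  · rfl

lemma sbarMinus_none (k : ℕ) (u : Ext A) (hu : u none = 0) : (sbarMinus A k u) none = 0 := by
  refine ext1_none A _ ?_ u hu
  rintro ⟨ε, s⟩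
  simp only [hsOn]
  apply twist_none
  unfold sbarMinusL
  apply negpow_none
  rw [Finsupp.finsetSum_apply]
  refine Finset.sum_eq_zero fun c _ => ?_
  split
  · exact wedgeMon_none A _ (ofFn_ne (by simpa using descList_ne _ s.2) _)
  · rfl

lemma quasi_of_symm (u : Ext A) (h0 : u none = 0)
    (h : ∀ s, u (some (true, s)) = u (some (false, s))) : IsQuasiZero A u := by
  classical
  refine ⟨u.filter (fun b => ∃ s, b = some (true, s)), ?_⟩
  ext b
  rw [Finsupp.add_apply, neg_apply, Finsupp.filter_apply, Finsupp.filter_apply]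
  rcases b with _ | ⟨ε, s⟩
  · simp [h0, negB]
  · cases ε <;> simp [negB, h]

/-! degree zero -/

lemma descList_empty : descList ∅ = [] := by simp [descList]

lemma descList_insert (m : ℕ) (t : Finset ℕ) (h : ∀ x ∈ t, x < m) :
    descList (insert m t) = m :: descList t := by
  apply List.Perm.eq_of_pairwise' (r := (· ≥ ·))
  · simp only [descList, List.pairwise_reverse]
    exact (Finset.pairwise_sort _ _)
  · rw [List.pairwise_cons]
    constructor
    · intro x hx
      simp [descList] at hx
      exact (h x hx).le
    · simp only [descList, List.pairwise_reverse]
      exact (Finset.pairwise_sort _ _)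
  · have hm : m ∉ t := fun hm => (h m hm).false
    rw [List.perm_ext_iff_of_nodup]
    · simp [descList]
    · simp [descList, Finset.sort_nodup]
    · simp [descList, hm, Finset.sort_nodup]

lemma bElem_pos (ε : Bool) (t : Finset ℕ) (h : t.Nonempty) :
    bElem A ε t = Finsupp.single (some (ε, ⟨t, h⟩)) 1 := by
  rw [bElem, dif_pos h]

lemma wedge_xg_bElem (a : ℕ) (ε : Bool) (t : Finset ℕ) (h : t.Nonempty) :
    wedge A (xg A a) (bElem A ε t) =
      if a ∈ t then 0 else bElem A (ε == decide ((t.filter (fun b => a < b)).card % 2 = 0)) (insert a t) := by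
  rw [wedge_eq, xg, bElem_pos A _ _ (Finset.singleton_nonempty a), ext1_single, one_smul,
    bElem_pos A _ _ h, ext1_single, one_smul]
  simp only [wB, mergeEven]
  by_cases ha : a ∈ t <;> simp [ha]

lemma wedge_xg_one (a : ℕ) : wedge A (xg A a) (one A) = xg A a := by
  rw [wedge_eq, xg, bElem, dif_pos (Finset.singleton_nonempty a), ext1_single, one_smul,
    one, ext1_single, one_smul, wB]

lemma wedgeMon_descList (t : Finset ℕ) : wedgeMon A (descList t) = bElem A true t := by
  induction t using Finset.induction_on_max with
  | empty => simp [descList_empty, wedgeMon, wedgeL, one, bElem]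
  | insert m t h ih =>
    rw [descList_insert m t h]
    change wedge A (xg A m) (wedgeMon A (descList t)) = _
    rw [ih]
    have hm : m ∉ t := fun hm => (h m hm).false
    rcases t.eq_empty_or_nonempty with rfl | ht
    · have : bElem A true ∅ = one A := by simp [bElem, one]
      rw [this, wedge_xg_one]; rfl
    · rw [wedge_xg_bElem _ _ _ _ ht, if_neg hm]
      have : t.filter (fun b => m < b) = ∅ := by
        ext x; simp; intro hx; exact (h x hx).le
      simp [this]

lemma sigMinus_zero_bElem (t : Finset ℕ) (h : t.Nonempty) :
    sigMinus A 0 (bElem A true t) = bElem A true t := by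
  conv_lhs => rw [bElem, dif_pos h, sigMinus, ext1_single, one_smul]
  simp [hsOn, twist, sigMinusL, Finset.Nat.antidiagonalTuple_zero_right, wedgeMon_descList, List.ofFn_getElem]

lemma sbarMinus_zero_bElem (t : Finset ℕ) (h : t.Nonempty) :
    sbarMinus A 0 (bElem A true t) = bElem A true t := by
  conv_lhs => rw [bElem, dif_pos h, sbarMinus, ext1_single, one_smul]
  simp [hsOn, twist, sbarMinusL, negpow, Finset.Nat.antidiagonalTuple_zero_right, wedgeMon_descList, List.ofFn_getElem]

lemma desc_eq (l : List ℕ) (h : l.Pairwise (· > ·)) : descList l.toFinset = l := by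
  induction l with
  | nil => simp [descList]
  | cons a l ih =>
    rw [List.pairwise_cons] at h
    rw [List.toFinset_cons, descList_insert, ih h.2]
    simpa using h.1

lemma xlam_eq (r : ℕ) (hr : 1 ≤ r) (lam : Fin r → ℕ) (hlam : Antitone lam) :
    ∃ t : Finset ℕ, t.Nonempty ∧ xlam A r lam = bElem A true t := by
  have hp : (List.ofFn fun i : Fin r => (r - 1 - (i : ℕ)) + lam i).Pairwise (· > ·) := by
    rw [List.pairwise_ofFn]
    intro i j hij
    have := hlam hij.le
    have := i.2
    have := j.2
    have : (i : ℕ) < j := hij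
    omega
  refine ⟨(List.ofFn fun i : Fin r => (r - 1 - (i : ℕ)) + lam i).toFinset, ?_, ?_⟩
  · rw [List.toFinset_nonempty_iff]
    exact ofFn_ne (by omega) _
  · rw [← wedgeMon_descList, desc_eq _ hp, xlam]

end basechange
end ExtSemi
namespace ExtSemi
section clas
open Polynomial

/-- The coefficient ring. -/
abbrev RR : Type := ℤ[X]
/-- The classical free module. -/
abbrev VV : Type := ℕ →₀ RR
/-- The classical exterior algebra. -/
abbrev EE : Type := ExteriorAlgebra RR VV

/-- generators of the module -/
noncomputable def vv (j : ℕ) : VV := Finsupp.single j 1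
/-- generators of the algebra -/
noncomputable def ee (j : ℕ) : EE := ExteriorAlgebra.ι RR (vv j)
/-- monomials -/
noncomputable def mon (l : List ℕ) : EE := (l.map ee).prod

lemma mon_cons (a : ℕ) (l : List ℕ) : mon (a :: l) = ee a * mon l := by simp [mon]

lemma ee_sq (a : ℕ) : ee a * ee a = 0 := ExteriorAlgebra.ι_sq_zero _
lemma ee_swap (a b : ℕ) : ee a * ee b = - (ee b * ee a) :=
  eq_neg_of_add_eq_zero_left (ExteriorAlgebra.ι_add_mul_swap _ _)

lemma ee_mul_mon_mem (a : ℕ) (l : List ℕ) (h : a ∈ l) : ee a * mon l = 0 := by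
  induction l with
  | nil => simp at h
  | cons b l ih =>
    rw [mon_cons, ← mul_assoc]
    rcases List.mem_cons.1 h with rfl | h
    · rw [ee_sq, zero_mul]
    · rw [ee_swap, neg_mul, mul_assoc, ih h, mul_zero, neg_zero]

lemma mon_insert (a : ℕ) (t : Finset ℕ) (h : a ∉ t) :
    ee a * mon (descList t) =
      (-1) ^ (t.filter (fun b => a < b)).card * mon (descList (insert a t)) := by
  induction t using Finset.induction_on_max with
  | empty =>
    rw [descList_insert a ∅ (by simp), mon_cons]; simp
  | insert m t hm ih =>
    have hmt : m ∉ t := fun h => (hm m h).false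
    rcases lt_trichotomy a m with ham | rfl | ham
    · have h1 : ∀ x ∈ insert a t, x < m := by
        intro x hx
        rcases Finset.mem_insert.1 hx with rfl | hx
        · exact ham
        · exact hm x hx
      rw [Finset.insert_comm, descList_insert m _ h1, descList_insert m t hm, mon_cons, mon_cons,
        ← mul_assoc, ee_swap, neg_mul, mul_assoc, ih (fun h' => h (by simp [h'])),
        Finset.filter_insert, if_pos ham, Finset.card_insert_of_notMem (by simp [hmt])]
      rw [pow_succ]
      rcases neg_one_pow_eq_or EE (t.filter (fun b => a < b)).card with h2 | h2 <;> rw [h2] <;> simp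
    · simp at h
    · have h1 : ∀ x ∈ insert m t, x < a := by
        intro x hx
        rcases Finset.mem_insert.1 hx with rfl | hx
        · exact ham
        · exact (hm x hx).trans ham
      have h2 : (insert m t).filter (fun b => a < b) = ∅ := by
        rw [Finset.filter_eq_empty_iff]
        intro x hx
        exact (h1 x hx).le.not_gt
      rw [descList_insert a _ h1, mon_cons, h2]; simp

/-- image of the basis -/
noncomputable def TB (z : EE) : XB → EE
  | none => z
  | some (ε, s) => if ε then mon (descList s.1) else - mon (descList s.1)

/-- comparison map -/
noncomputable def T (z : EE) : Ext ℕ →+ EE :=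
  Finsupp.liftAddHom (fun b => (AddMonoidHom.flip (smulAddHom ℕ EE)) (TB z b))

lemma T_single (z : EE) (b : XB) (n : ℕ) : T z (Finsupp.single b n) = n • TB z b := by
  simp [T]

lemma T_bElem (z : EE) (ε : Bool) (t : Finset ℕ) (h : t.Nonempty) :
    T z (bElem ℕ ε t) = if ε then mon (descList t) else - mon (descList t) := by
  rw [bElem_pos ℕ _ _ h, T_single, one_smul, TB]

lemma T_neg (u : Ext ℕ) : T 0 (neg ℕ u) = - T 0 u := by
  induction u using Finsupp.induction_linear with
  | zero => simp
  | add f g hf hg => simp [hf, hg]; abel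
  | single b n =>
    rw [neg_single, T_single, T_single]
    rcases b with _ | ⟨ε, s⟩ 
    · simp [negB, TB]
    · cases ε <;> simp [negB, TB]

lemma T_ext1 (z : EE) (g : XB → Ext ℕ) (u : Ext ℕ) :
    T z (ext1 ℕ g u) = u.sum fun b n => n • T z (g b) := by
  simp [ext1, Finsupp.sum, map_sum]

lemma wedge_zero (u : Ext ℕ) : wedge ℕ u 0 = 0 := by
  simp [wedge]
lemma wedge_add (u v w : Ext ℕ) : wedge ℕ u (v + w) = wedge ℕ u v + wedge ℕ u w := by
  simp only [wedge_eq, ext1_add]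
  simp [ext1, Finsupp.sum, Finset.sum_add_distrib]
lemma wedge_single (a : ℕ) (b : XB) (n : ℕ) :
    wedge ℕ (xg ℕ a) (Finsupp.single b n) = n • wedge ℕ (xg ℕ a) (Finsupp.single b 1) := by
  have : (Finsupp.single b n : Ext ℕ) = n • Finsupp.single b 1 := by simp
  rw [this]
  generalize (Finsupp.single b 1 : Ext ℕ) = v
  induction n with
  | zero => simp [wedge_zero]
  | succ n ih => rw [add_smul, add_smul, wedge_add, ih (by simp)]; simp

lemma T_wedge (z : EE) (a : ℕ) (v : Ext ℕ) :
    T z (wedge ℕ (xg ℕ a) v) = ee a * T 1 v := by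
  induction v using Finsupp.induction_linear with
  | zero => simp [wedge_zero]
  | add f g hf hg => simp [hf, hg, wedge_add, mul_add]
  | single b n =>
    rw [wedge_single, map_nsmul, T_single, mul_smul_comm]
    congr 1
    rcases b with _ | ⟨ε, s, hs⟩
    · have := wedge_xg_one ℕ a
      rw [one] at this
      rw [this, xg, T_bElem _ _ _ (by simp), ← insert_empty_eq, descList_insert _ _ (by simp), descList_empty]
      simp [TB, mon]
    · rw [← bElem_pos, wedge_xg_bElem _ _ _ _ hs]
      by_cases ha : a ∈ s
      · rw [if_pos ha, TB]
        have := ee_mul_mon_mem a (descList s) (by simpa [descList] using ha)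
        cases ε <;> simp [this]
      · rw [if_neg ha, T_bElem _ _ _ (by simp), TB]
        have := mon_insert a s ha
        rcases Nat.mod_two_eq_zero_or_one (s.filter (fun b => a < b)).card with h2 | h2
        · rw [(Nat.even_iff.2 h2).neg_one_pow] at this
          cases ε <;> simp [this, h2]
        · rw [(Nat.odd_iff.2 h2).neg_one_pow] at this
          cases ε <;> simp [this, h2]

lemma T_one_wedgeMon (l : List ℕ) : T 1 (wedgeMon ℕ l) = mon l := by
  induction l with
  | nil => simp [wedgeMon, wedgeL, one, T_single, TB, mon]
  | cons a l ih =>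
    change T 1 (wedge ℕ (xg ℕ a) (wedgeMon ℕ l)) = _
    rw [T_wedge, ih, mon_cons]

lemma T_wedgeMon (l : List ℕ) (h : l ≠ []) : T 0 (wedgeMon ℕ l) = mon l := by
  cases l with
  | nil => simp at h
  | cons a l =>
    change T 0 (wedge ℕ (xg ℕ a) (wedgeMon ℕ l)) = _
    rw [T_wedge, T_one_wedgeMon, mon_cons]

/-! coordinate functionals -/

lemma mon_eq_ιMulti {n : ℕ} (f : Fin n → ℕ) :
    mon (List.ofFn f) = ExteriorAlgebra.ιMulti RR n (fun i => vv (f i)) := by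
  rw [ExteriorAlgebra.ιMulti_apply, mon, List.map_ofFn]; rfl

/-- determinant functional -/
noncomputable def detF (l : List ℕ) : VV [⋀^Fin l.length]→ₗ[RR] RR :=
  (Matrix.detRowAlternating (R := RR) (n := Fin l.length)).compLinearMap
    (LinearMap.pi fun j => Finsupp.lapply (l.get j))

/-- coordinate functional -/
noncomputable def coo (l : List ℕ) : EE →ₗ[RR] RR :=
  ExteriorAlgebra.liftAlternating (Pi.single l.length (detF l))

lemma coo_mon (l m : List ℕ) : coo l (mon m) =
    if h : m.length = l.length then
      Matrix.det (Matrix.of fun i j : Fin l.length => if m.get (i.cast h.symm) = l.get j then (1 : RR) else 0)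
    else 0 := by
  conv_lhs => rw [← List.ofFn_get m, mon_eq_ιMulti, coo, ExteriorAlgebra.liftAlternating_apply_ιMulti]
  split
  · rename_i h
    obtain ⟨n, f, rfl⟩ : ∃ n, ∃ f : Fin n → ℕ, m = List.ofFn f := ⟨_, m.get, by simp⟩
    have : ∀ (k : ℕ) (hk : k = l.length) (w : Fin k → VV),
      (Pi.single l.length (detF l) : ∀ i, VV [⋀^Fin i]→ₗ[RR] RR) k w = detF l (fun i => w (i.cast hk.symm)) := by
      rintro k rfl w
      simp
    rw [this _ h]
    simp only [detF, AlternatingMap.compLinearMap_apply]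
    change Matrix.det _ = _
    congr 1
    ext i j : 2
    simp [vv, Finsupp.single_apply]
  · rename_i h
    rw [Pi.single_eq_of_ne h]; rfl

lemma descList_nodup (s : Finset ℕ) : (descList s).Nodup := by
  simp [descList, Finset.sort_nodup]

lemma descList_length (s : Finset ℕ) : (descList s).length = s.card := by
  simp [descList]

lemma mem_descList (s : Finset ℕ) (a : ℕ) : a ∈ descList s ↔ a ∈ s := by
  simp [descList]

lemma coo_desc (s t : Finset ℕ) : coo (descList s) (mon (descList t)) = if s = t then 1 else 0 := by
  rw [coo_mon]
  split_ifs with h h' h'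
  · subst h'
    refine Eq.trans (congrArg Matrix.det ?_) (Matrix.det_one (R := RR) (n := Fin (descList s).length))
    ext i j : 2
    simp only [Fin.cast_eq_self, Matrix.of_apply, Matrix.one_apply]
    simp only [(descList_nodup s).get_inj_iff]
  · have : ∃ a ∈ t, a ∉ s := by
      by_contra! hc
      simp only [descList_length] at h
      exact h' (Finset.eq_of_subset_of_card_le hc h.ge).symm
    obtain ⟨a, hat, has⟩ := this
    obtain ⟨i, hi⟩ := List.get_of_mem ((mem_descList t a).2 hat)
    refine Matrix.det_eq_zero_of_row_eq_zero (i.cast h) fun j => ?_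
    rw [Matrix.of_apply, if_neg]
    simp only [Fin.cast_cast, Fin.cast_eq_self, hi]
    rintro rfl
    exact has ((mem_descList s _).1 (List.get_mem _ _))
  · subst h'; exact absurd rfl h
  · rfl

lemma coo_T (s : {s : Finset ℕ // s.Nonempty}) (u : Ext ℕ) :
    coo (descList s.1) (T 0 u) = C ((u (some (true, s)) : ℤ) - u (some (false, s))) := by
  induction u using Finsupp.induction_linear with
  | zero => simp
  | add f g hf hg => rw [map_add, map_add, hf, hg, ← C_add, Finsupp.add_apply, Finsupp.add_apply]; congr 1; push_cast; ring
  | single b n =>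
    rw [T_single, map_nsmul]
    rcases b with _ | ⟨ε, t⟩
    · simp [TB]
    · have h : s.1 = t.1 ↔ t = s := by rw [eq_comm, Subtype.ext_iff]
      by_cases hst : t = s <;> cases ε <;> simp [TB, coo_desc, h, hst]

/-! operators -/

/-- The operator on `V`. -/
noncomputable def opV (b : ℕ → ℕ) (τ : RR) : VV →ₗ[RR] VV :=
  Finsupp.linearCombination RR fun j => ∑ c ∈ Finset.range (b j + 1), τ ^ c • vv (j - c)

lemma opV_vv (b : ℕ → ℕ) (τ : RR) (j : ℕ) :
    opV b τ (vv j) = ∑ c ∈ Finset.range (b j + 1), τ ^ c • vv (j - c) := by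
  simp [opV, vv]

lemma VV_ext {f g : VV →ₗ[RR] VV} (h : ∀ j, f (vv j) = g (vv j)) : f = g := by
  ext j : 2
  simpa [vv] using h j

lemma sig_succ (j : ℕ) : opV (fun j => j) X (vv (j + 1)) = vv (j + 1) + (X : RR) • opV (fun j => j) X (vv j) := by
  rw [opV_vv, opV_vv, Finset.sum_range_succ', add_comm, Finset.smul_sum]
  simp [pow_succ', mul_smul]

lemma sbar_succ (j : ℕ) : opV (fun j => min 1 j) (-X) (vv (j + 1)) = vv (j + 1) - (X : RR) • vv j := by
  rw [opV_vv]
  simp [Finset.sum_range_succ, sub_eq_add_neg]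

lemma sig_zero : opV (fun j => j) X (vv 0) = vv 0 := by simp [opV_vv]
lemma sbar_zero : opV (fun j => min 1 j) (-X) (vv 0) = vv 0 := by simp [opV_vv]

lemma sig_sbar : opV (fun j => j) X ∘ₗ opV (fun j => min 1 j) (-X) = LinearMap.id := by
  apply VV_ext
  intro j
  cases j with
  | zero => simp [sig_zero, sbar_zero]
  | succ j => simp [sbar_succ, sig_succ]

lemma sbar_sig : opV (fun j => min 1 j) (-X) ∘ₗ opV (fun j => j) X = LinearMap.id := by
  apply VV_ext
  intro j
  induction j with
  | zero => simp [sig_zero, sbar_zero]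
  | succ j ih =>
    simp only [LinearMap.comp_apply, LinearMap.id_apply] at ih ⊢
    rw [sig_succ, map_add, map_smul, ih, sbar_succ, sub_add_cancel]

open Finset.Nat in
lemma map_mon (b : ℕ → ℕ) (τ : RR) (l : List ℕ) (N : ℕ) (hN : (∑ i : Fin l.length, b (l.get i)) < N) :
    ExteriorAlgebra.map (opV b τ) (mon l) =
      ∑ k ∈ Finset.range N, τ ^ k • ∑ c ∈ antidiagonalTuple l.length k,
        if ∀ i, c i ≤ b (l.get i) then mon (List.ofFn fun i : Fin l.length => l.get i - c i) else 0 := by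
  conv_lhs => rw [← List.ofFn_get l, mon_eq_ιMulti, ExteriorAlgebra.map_apply_ιMulti]
  have h1 : (opV b τ ∘ fun i => vv (l.get i)) = fun i : Fin l.length =>
      ∑ c ∈ Finset.range (b (l.get i) + 1), τ ^ c • vv (l.get i - c) := by
    funext i; exact opV_vv _ _ _
  rw [h1]
  have h2 := (ExteriorAlgebra.ιMulti RR l.length (M := VV)).toMultilinearMap.map_sum_finset
    (fun i c => τ ^ c • vv (l.get i - c)) (fun i => Finset.range (b (l.get i) + 1))
  simp only [AlternatingMap.coe_multilinearMap] at h2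
  rw [h2, ← Finset.sum_fiberwise_of_maps_to (t := Finset.range N) (g := fun c => ∑ i, c i)]
  · refine Finset.sum_congr rfl fun k _ => ?_
    rw [← Finset.sum_filter, Finset.smul_sum]
    refine Finset.sum_congr ?_ ?_
    · ext c
      simp [Fintype.mem_piFinset, mem_antidiagonalTuple, and_comm]
    · intro c hc
      have hk : ∑ i, c i = k := mem_antidiagonalTuple.1 (Finset.mem_filter.1 hc).1
      have h3 := (ExteriorAlgebra.ιMulti RR l.length (M := VV)).toMultilinearMap.map_smul_univ
        (fun i => τ ^ c i) (fun i => vv (l.get i - c i))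
      simp only [AlternatingMap.coe_multilinearMap] at h3
      rw [h3, Finset.prod_pow_eq_pow_sum, hk, mon_eq_ιMulti]
  · intro c hc
    rw [Finset.mem_range]
    refine lt_of_le_of_lt (Finset.sum_le_sum fun i _ => ?_) hN
    have := Fintype.mem_piFinset.1 hc i
    simpa [Nat.lt_succ_iff] using this

/-- compatibility -/
def Compat (S : ℕ → Ext ℕ → Ext ℕ) (Λ : EE →ₐ[RR] EE) : Prop :=
  (∀ u, ∀ᶠ N in Filter.atTop, Λ (T 0 u) = ∑ k ∈ Finset.range N, (X : RR) ^ k • T 0 (S k u))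

lemma T_twist (ε : Bool) (u : Ext ℕ) : T 0 (twist ℕ ε u) = if ε then T 0 u else - T 0 u := by
  unfold twist; cases ε <;> simp [T_neg]

lemma T_negpow (k : ℕ) (u : Ext ℕ) : T 0 (negpow ℕ k u) = (-1 : RR) ^ k • T 0 u := by
  unfold negpow
  split
  · rename_i h; rw [(Nat.even_iff.2 h).neg_one_pow]; simp
  · rename_i h; rw [(Nat.odd_iff.2 (by omega)).neg_one_pow, T_neg]; simp

lemma compat_of (F : ℕ → List ℕ → Ext ℕ) (Λ : EE →ₐ[RR] EE)
    (h : ∀ l, l ≠ [] → ∀ᶠ N in Filter.atTop,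
      Λ (mon l) = ∑ k ∈ Finset.range N, (X : RR) ^ k • T 0 (F k l)) :
    Compat (fun k => ext1 ℕ (hsOn ℕ F k)) Λ := by
  intro u
  induction u using Finsupp.induction_linear with
  | zero => simp [ext1_zero]
  | add f g hf hg =>
    filter_upwards [hf, hg] with N h1 h2
    simp [ext1_add, h1, h2, Finset.sum_add_distrib]
  | single b n =>
    rcases b with _ | ⟨ε, s⟩
    · refine Filter.Eventually.of_forall fun N => ?_
      rw [T_single]
      simp only [TB, smul_zero, map_zero]
      symm
      refine Finset.sum_eq_zero fun k _ => ?_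
      rw [ext1_single, map_nsmul, hsOn]
      split <;> simp [one, T_single, TB]
    · filter_upwards [h _ (descList_ne _ s.2)] with N hN
      rw [T_single, map_nsmul]
      simp only [ext1_single, map_nsmul, hsOn, T_twist]
      simp_rw [smul_comm _ n]
      rw [← Finset.smul_sum]
      congr 1
      cases ε <;> simp [TB, hN]

lemma compat_sig : Compat (sigMinus ℕ) (ExteriorAlgebra.map (opV (fun j => j) X)) := by
  refine compat_of _ _ fun l hl => ?_
  filter_upwards [Filter.eventually_gt_atTop _] with N hN
  rw [map_mon _ _ _ N hN]
  refine Finset.sum_congr rfl fun k _ => ?_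
  congr 1
  rw [sigMinusL, map_sum]
  refine Finset.sum_congr rfl fun c _ => ?_
  split
  · rw [T_wedgeMon _ (ofFn_ne (by simpa using hl) _)]
  · simp

lemma compat_sbar : Compat (sbarMinus ℕ) (ExteriorAlgebra.map (opV (fun j => min 1 j) (-X))) := by
  refine compat_of _ _ fun l hl => ?_
  filter_upwards [Filter.eventually_gt_atTop _] with N hN
  rw [map_mon _ _ _ N hN]
  refine Finset.sum_congr rfl fun k _ => ?_
  rw [sbarMinusL, T_negpow, smul_smul, neg_pow, mul_comm]
  congr 1
  rw [map_sum]
  refine Finset.sum_congr rfl fun c _ => ?_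
  simp only [le_min_iff]
  split
  · rw [T_wedgeMon _ (ofFn_ne (by simpa using hl) _)]
  · simp

lemma main_coeff (S S' : ℕ → Ext ℕ → Ext ℕ) (Λ Λ' : EE →ₐ[RR] EE) (hS : Compat S Λ)
    (hS' : Compat S' Λ') (hΛ : ∀ e, Λ (Λ' e) = e) (x : Ext ℕ) (k : ℕ) (hk : 1 ≤ k)
    (s : {s : Finset ℕ // s.Nonempty}) :
    (∑ j ∈ Finset.range (k + 1), S j (S' (k - j) x)) (some (true, s)) =
    (∑ j ∈ Finset.range (k + 1), S j (S' (k - j) x)) (some (false, s)) := by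
  obtain ⟨N, hN, hkN⟩ := ((hS' x).and (Filter.eventually_gt_atTop k)).exists
  have h2 : ∀ᶠ M in Filter.atTop, ∀ i ∈ Finset.range N,
      Λ (T 0 (S' i x)) = ∑ j ∈ Finset.range M, (X : RR) ^ j • T 0 (S j (S' i x)) :=
    (Filter.eventually_all_finset _).2 fun i _ => hS _
  obtain ⟨M, hM, hkM⟩ := (h2.and (Filter.eventually_gt_atTop k)).exists
  have key : T 0 x = ∑ i ∈ Finset.range N, ∑ j ∈ Finset.range M,
      (X : RR) ^ (i + j) • T 0 (S j (S' i x)) := by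
    rw [← hΛ (T 0 x), hN, map_sum]
    refine Finset.sum_congr rfl fun i hi => ?_
    rw [map_smul, hM i hi, Finset.smul_sum]
    simp only [smul_smul, pow_add]
  have key2 := congrArg (fun e => (coo (descList s.1) e).coeff k) key
  simp only [map_sum, map_smul, coo_T, finsetSum_coeff, smul_eq_mul, coeff_X_pow_mul',
    coeff_C] at key2
  rw [if_neg (by omega)] at key2
  have h3 : ∀ i j : ℕ, ∀ z : ℤ, (if i + j ≤ k then (if k - (i + j) = 0 then z else 0) else 0)
      = if i + j = k then z else 0 := by
    intro i j z; split_ifs <;> first | rfl | omega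
  simp only [h3] at key2
  rw [Finset.sum_comm] at key2
  have h4 : ∀ f : ℕ → ℕ → ℤ, ∑ j ∈ Finset.range M, ∑ i ∈ Finset.range N,
      (if i + j = k then f i j else 0) = ∑ j ∈ Finset.range (k + 1), f (k - j) j := by
    intro f
    rw [← Finset.sum_subset (s₁ := Finset.range (k + 1)) (s₂ := Finset.range M)]
    · refine Finset.sum_congr rfl fun j hj => ?_
      rw [Finset.mem_range] at hj
      rw [Finset.sum_eq_single (k - j)]
      · rw [if_pos (by omega)]
      · intro i _ hi
        rw [if_neg (by omega)]
      · intro h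
        exact absurd (Finset.mem_range.2 (by omega)) h
    · intro j hj
      rw [Finset.mem_range] at hj ⊢
      omega
    · intro j _ hj
      rw [Finset.mem_range] at hj
      refine Finset.sum_eq_zero fun i _ => ?_
      rw [if_neg (by omega)]
  rw [h4 (fun i j => ((S j (S' i x)) (some (true, s)) : ℤ) - (S j (S' i x)) (some (false, s))),
    Finset.sum_sub_distrib, eq_comm, sub_eq_zero] at key2
  rw [Finsupp.finsetSum_apply, Finsupp.finsetSum_apply]
  exact_mod_cast key2

lemma quasi_sig_sbar (x : Ext ℕ) (hx : x none = 0) (k : ℕ) (hk : 1 ≤ k) :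
    IsQuasiZero ℕ (∑ j ∈ Finset.range (k + 1), sigMinus ℕ j (sbarMinus ℕ (k - j) x)) := by
  refine quasi_of_symm _ _ ?_ (main_coeff _ _ _ _ compat_sig compat_sbar ?_ x k hk)
  · rw [Finsupp.finsetSum_apply]
    exact Finset.sum_eq_zero fun j _ => sigMinus_none _ _ _ (sbarMinus_none _ _ _ hx)
  · intro e
    rw [← AlgHom.comp_apply, ExteriorAlgebra.map_comp_map, sig_sbar, ExteriorAlgebra.map_id]
    rfl

lemma quasi_sbar_sig (x : Ext ℕ) (hx : x none = 0) (k : ℕ) (hk : 1 ≤ k) :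
    IsQuasiZero ℕ (∑ j ∈ Finset.range (k + 1), sbarMinus ℕ j (sigMinus ℕ (k - j) x)) := by
  refine quasi_of_symm _ _ ?_ (main_coeff _ _ _ _ compat_sbar compat_sig ?_ x k hk)
  · rw [Finsupp.finsetSum_apply]
    exact Finset.sum_eq_zero fun j _ => sbarMinus_none _ _ _ (sigMinus_none _ _ _ hx)
  · intro e
    rw [← AlgHom.comp_apply, ExteriorAlgebra.map_comp_map, sbar_sig, ExteriorAlgebra.map_id]
    rfl

end clas
end ExtSemi

namespace ExtSemi

/-- For every `r ≥ 1` and every partition `λ` with at most `r`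
parts, the Schubert derivations `σ₋(w)` and `σ̄₋(w)` are mutually quasi-inverse
on `[x]^r_λ`: in each composite (coefficientwise convolution in `w^{−k}`) the
coefficient of `w^0` equals `[x]^r_λ` plus possibly a quasi-zero, and the
coefficient of `w^{−k}`, `k ≥ 1`, is a quasi-zero; i.e.
`σ₋(w)(σ̄₋(w)[x]^r_λ) ⪰ [x]^r_λ` and `σ̄₋(w)(σ₋(w)[x]^r_λ) ⪰ [x]^r_λ`. -/
theorem sigMinus_sbarMinus_quasi_inverse (A : Type*) [CommSemiring A]
    (r : ℕ) (hr : 1 ≤ r) (lam : Fin r → ℕ) (hlam : Antitone lam) :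
    (Prec A (xlam A r lam) (sigMinus A 0 (sbarMinus A 0 (xlam A r lam)))) ∧
    (∀ k : ℕ, 1 ≤ k →
      IsQuasiZero A
        (∑ j ∈ Finset.range (k + 1), sigMinus A j (sbarMinus A (k - j) (xlam A r lam)))) ∧
    (Prec A (xlam A r lam) (sbarMinus A 0 (sigMinus A 0 (xlam A r lam)))) ∧
    (∀ k : ℕ, 1 ≤ k →
      IsQuasiZero A
        (∑ j ∈ Finset.range (k + 1), sbarMinus A j (sigMinus A (k - j) (xlam A r lam)))) := by
  obtain ⟨t, ht, hx⟩ := xlam_eq A r hr lam hlam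
  have hbc : bc A (xlam ℕ r lam) = xlam A r lam := bc_wedgeMon A _
  have h0 : (xlam ℕ r lam) none = 0 := wedgeMon_none ℕ _ (ofFn_ne (by omega) _)
  refine ⟨⟨0, ⟨0, by simp⟩, ?_⟩, fun k hk => ?_, ⟨0, ⟨0, by simp⟩, ?_⟩, fun k hk => ?_⟩
  · rw [hx, sbarMinus_zero_bElem A t ht, sigMinus_zero_bElem A t ht, add_zero]
  · have := bc_quasi A _ (quasi_sig_sbar (xlam ℕ r lam) h0 k hk)
    simpa only [map_sum, bc_sigMinus, bc_sbarMinus, hbc] using this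
  · rw [hx, sigMinus_zero_bElem A t ht, sbarMinus_zero_bElem A t ht, add_zero]
  · have := bc_quasi A _ (quasi_sbar_sig (xlam ℕ r lam) h0 k hk)
    simpa only [map_sum, bc_sigMinus, bc_sbarMinus, hbc] using this

end ExtSemi
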